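/- (Closed-form solution of the high-probability ODE in the Gaussian case, Remark 5.) Let D be a positive natural number, α, σ : ℝ → ℝ smooth with α(u) > 0 and σ(u) > 0 for all u and α(0) = 1, λ(u) = log(α(u)²/σ(u)²), f(u) = (d/du) log α(u), g(u)² = -λ'(u)·σ(u)². Let p : ℝ → ℝ^D → ℝ be smooth and everywhere positive, satisfying the linear-drift Fokker–Planck equation ∂_t p(t,x) = -div_x(f(t)·x·p(t,x)) + (1/2)·g(t)²·Δ_x p(t,x) for all t and x, and assume additionally that ∇_x(Δ_x log p)(s, x) = 0 for all s and x. Fix t > 0 and let y : [0, t] → ℝ^D be a differentiable curve satisfying the high-probability ODE y'(s) = f(s)·y(s) - g(s)²·∇_x log p(s, y(s)) for all s ∈ [0, t]. Then y(0) = (y(t) + σ(t)²·∇_x log p(t, y(t)))/α(t) - e^{-λ(0)}·α(t)·∇_x log p(t, y(t)); equivalently, y(0) = y(t)/α(t) + (e^{-λ(t)} - e^{-λ(0)})·α(t)·∇_x log p(t, y(t)). -/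

import Mathlib

open scoped BigOperators RealInnerProductSpace
open MeasureTheory

/-- Divergence of a vector field on `EuclideanSpace ℝ (Fin D)`. -/
noncomputable def divg {D : ℕ} (F : EuclideanSpace ℝ (Fin D) → EuclideanSpace ℝ (Fin D))
    (x : EuclideanSpace ℝ (Fin D)) : ℝ :=
  ∑ i, fderiv ℝ F x (EuclideanSpace.single i 1) i

/-- Laplacian of a scalar field on `EuclideanSpace ℝ (Fin D)`. -/
noncomputable def lap {D : ℕ} (f : EuclideanSpace ℝ (Fin D) → ℝ)
    (x : EuclideanSpace ℝ (Fin D)) : ℝ :=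
  divg (gradient f) x

/-! The function `u = log p` satisfies a Hamilton–Jacobi equation `∂ₜu = -H(x, ∇u)`, and the
high-probability ODE is the position equation `y' = ∂_ξ H(y, ξ)` of its characteristics. The
momentum equation `ξ' = -∂ₓH` governs the score `ξ = ∇u` along the curve. Since `∇Δu = 0`, it reads
`ξ' = -f ξ`, so `α ξ` is conserved. The position equation then shows that `α⁻¹ y + e^{-λ} α ξ` is
conserved as well, and comparing its values at the two end points gives the formula. -/

open Filter Function InnerProductSpace Set
open scoped Gradient Topology

section Characteristics

section NormedSpace

variable {E F : Type*} [NormedAddCommGroup E] [NormedSpace ℝ E]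
  [NormedAddCommGroup F] [NormedSpace ℝ F] {U : ℝ → E → F} {s : ℝ} {x : E}

theorem deriv_eq_fderiv_uncurry (hU : DifferentiableAt ℝ (uncurry U) (s, x)) :
    deriv (fun r => U r x) s = fderiv ℝ (uncurry U) (s, x) (1, 0) :=
  (hU.hasFDerivAt.comp_hasDerivAt (f := (·, x)) s
    ((hasDerivAt_id s).prodMk (hasDerivAt_const s x))).deriv

theorem fderiv_eq_fderiv_uncurry_comp_inr (hU : DifferentiableAt ℝ (uncurry U) (s, x)) :
    fderiv ℝ (U s) x = (fderiv ℝ (uncurry U) (s, x)).comp (.inr ℝ ℝ E) :=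
  (hU.hasFDerivAt.comp x (hasFDerivAt_prodMk_right s x)).fderiv

theorem hasDerivWithinAt_fderiv_along {y : ℝ → E} {w : E} {I : Set ℝ}
    (hU : ContDiffAt ℝ 2 (uncurry U) (s, y s)) (hy : HasDerivWithinAt y w I s) :
    HasDerivWithinAt (fun r => fderiv ℝ (U r) (y r))
      (fderiv ℝ (fun x => deriv (fun r => U r x) s + fderiv ℝ (U s) x w) (y s)) I s := by
  set u := uncurry U
  have hdiff : ∀ᶠ q in 𝓝 (s, y s), DifferentiableAt ℝ u q :=
    (hU.eventually (by simp)).mono fun q hq => hq.differentiableAt (by simp)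
  have hu' : HasFDerivAt (fderiv ℝ u) (fderiv ℝ (fderiv ℝ u) (s, y s)) (s, y s) :=
    ((hU.fderiv_right (m := 1) (by norm_num)).differentiableAt (by simp)).hasFDerivAt
  have hcurve : HasDerivWithinAt (fun r => (r, y r)) (1, w) I s :=
    (hasDerivWithinAt_id s I).prodMk hy
  have hspace : HasFDerivAt (fun x => fderiv ℝ u (s, x) (1, w))
      (((fderiv ℝ (fderiv ℝ u) (s, y s)).comp (.inr ℝ ℝ E)).flip (1, w)) (y s) := by
    simpa using (hu'.comp (y s) (hasFDerivAt_prodMk_right s (y s))).clm_apply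
      (hasFDerivAt_const (1, w) (y s))
  have hmaterial : (fun x => deriv (fun r => U r x) s + fderiv ℝ (U s) x w)
      =ᶠ[𝓝 (y s)] fun x => fderiv ℝ u (s, x) (1, w) := by
    filter_upwards [(Continuous.prodMk_right s).continuousAt.eventually hdiff] with x hx
    rw [deriv_eq_fderiv_uncurry hx, fderiv_eq_fderiv_uncurry_comp_inr hx]
    simp [u, ← map_add]
  have hsymm : IsSymmSndFDerivAt ℝ u (s, y s) := hU.isSymmSndFDerivAt (by simp)
  have hmixed : ((fderiv ℝ (fderiv ℝ u) (s, y s)).comp (.inr ℝ ℝ E)).flip (1, w)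
      = (fderiv ℝ (fderiv ℝ u) (s, y s) (1, w)).comp (.inr ℝ ℝ E) :=
    ContinuousLinearMap.ext fun v => hsymm.eq (0, v) (1, w)
  rw [hmaterial.fderiv_eq, hspace.fderiv, hmixed]
  refine (((ContinuousLinearMap.compL ℝ E (ℝ × E) F).flip (.inr ℝ ℝ E)).hasFDerivAt
    |>.comp_hasDerivWithinAt s (hu'.comp_hasDerivWithinAt s hcurve)).congr_of_eventuallyEq ?_ ?_
  · filter_upwards [hcurve.continuousWithinAt.eventually hdiff] with r hr
    exact fderiv_eq_fderiv_uncurry_comp_inr hr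
  · exact fderiv_eq_fderiv_uncurry_comp_inr hdiff.self_of_nhds

end NormedSpace

variable {E : Type*} [NormedAddCommGroup E] [InnerProductSpace ℝ E] [CompleteSpace E]

theorem contDiffAt_gradient {f : E → ℝ} {x : E} {m n : WithTop ℕ∞} (hf : ContDiffAt ℝ n f x)
    (hmn : m + 1 ≤ n) : ContDiffAt ℝ m (∇ f) x :=
  (toDual ℝ E).symm.contDiff.contDiffAt.comp x (hf.fderiv_right hmn)

variable {U : ℝ → E → ℝ} {y : ℝ → E} {w : E} {I : Set ℝ} {s : ℝ}

theorem hasDerivWithinAt_gradient_along (hU : ContDiffAt ℝ 2 (uncurry U) (s, y s))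
    (hy : HasDerivWithinAt y w I s) :
    HasDerivWithinAt (fun r => ∇ (U r) (y r))
      (∇ (fun x => deriv (fun r => U r x) s + ⟪∇ (U s) x, w⟫) (y s)) I s := by
  simp only [inner_gradient_left]
  exact (toDual ℝ E).symm.toContinuousLinearEquiv.hasFDerivAt.comp_hasDerivWithinAt s
    (hasDerivWithinAt_fderiv_along hU hy)

/- The Hessian of `U s` drops out because the curve moves with velocity `∂_ξ H`. -/
theorem hasDerivWithinAt_gradient_of_hamiltonJacobi {H : E × E → ℝ} {k : E}
    (hU : ContDiffAt ℝ 2 (uncurry U) (s, y s))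
    (hHJ : ∀ᶠ x in 𝓝 (y s), deriv (fun r => U r x) s = -H (x, ∇ (U s) x))
    (hH : HasFDerivAt H ((innerSL ℝ k).coprod (innerSL ℝ w)) (y s, ∇ (U s) (y s)))
    (hy : HasDerivWithinAt y w I s) :
    HasDerivWithinAt (fun r => ∇ (U r) (y r)) (-k) I s := by
  have hUs : ContDiffAt ℝ 2 (U s) (y s) :=
    hU.comp (y s) (contDiff_prodMk_right s).contDiffAt
  have hgrad : HasFDerivAt (∇ (U s)) (fderiv ℝ (∇ (U s)) (y s)) (y s) :=
    ((contDiffAt_gradient (m := 1) hUs (by norm_num)).differentiableAt (by simp)).hasFDerivAt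
  have hmaterial : HasGradientAt (fun x => -H (x, ∇ (U s) x) + ⟪∇ (U s) x, w⟫) (-k) (y s) := by
    rw [hasGradientAt_iff_hasFDerivAt]
    convert! (hH.comp (y s) ((hasFDerivAt_id (y s)).prodMk hgrad)).neg.add
      (hgrad.inner ℝ (hasFDerivAt_const w (y s))) using 1
    ext v
    simp [real_inner_comm]
  convert! hasDerivWithinAt_gradient_along hU hy using 1
  rw [EventuallyEq.gradient_eq (hHJ.mono fun x hx => by rw [hx])]
  exact hmaterial.gradient.symm

end Characteristics

section Divergence

variable {D : ℕ} {x : EuclideanSpace ℝ (Fin D)}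

theorem divg_congr {F G : EuclideanSpace ℝ (Fin D) → EuclideanSpace ℝ (Fin D)}
    (h : F =ᶠ[𝓝 x] G) : divg F x = divg G x := by
  simp only [divg, h.fderiv_eq]

theorem divg_smul {a : EuclideanSpace ℝ (Fin D) → ℝ}
    {F : EuclideanSpace ℝ (Fin D) → EuclideanSpace ℝ (Fin D)}
    (ha : DifferentiableAt ℝ a x) (hF : DifferentiableAt ℝ F x) :
    divg (fun z => a z • F z) x = a x * divg F x + ⟪∇ a x, F x⟫ := by
  have hexpand : ⟪∇ a x, F x⟫ = ∑ i, fderiv ℝ a x (EuclideanSpace.single i 1) * F x i := by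
    simp [PiLp.inner_apply, ← inner_gradient_left, mul_comm]
  rw [hexpand, divg, fderiv_fun_smul ha hF, divg, Finset.mul_sum, ← Finset.sum_add_distrib]
  simp

theorem divg_const_smul_id (c : ℝ) (x : EuclideanSpace ℝ (Fin D)) :
    divg (fun z => c • z) x = c * D := by
  have h : fderiv ℝ (fun z : EuclideanSpace ℝ (Fin D) => c • z) x = c • .id ℝ _ :=
    ((hasFDerivAt_id x).const_smul c).fderiv
  simp [divg, h, mul_comm]

theorem contDiffAt_divg {F : EuclideanSpace ℝ (Fin D) → EuclideanSpace ℝ (Fin D)}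
    {m n : WithTop ℕ∞} (hF : ContDiffAt ℝ n F x) (hmn : m + 1 ≤ n) :
    ContDiffAt ℝ m (divg F) x :=
  ContDiffAt.sum fun i _ => (EuclideanSpace.proj (𝕜 := ℝ) i).contDiff.contDiffAt.comp x
    ((hF.fderiv_right hmn).clm_apply contDiffAt_const)

end Divergence

section Score

/-- The score `∇ log ρ` of a density `ρ`, the momentum along the high-probability ODE. As `Real.log`
is `log |·|`, it is `∇ρ / ρ` at every point where `ρ` is differentiable and nonzero. -/
noncomputable def score {E : Type*} [NormedAddCommGroup E] [InnerProductSpace ℝ E] [CompleteSpace E]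
    (ρ : E → ℝ) : E → E :=
  ∇ fun z => Real.log (ρ z)

theorem gradient_eq_smul_score {E : Type*} [NormedAddCommGroup E] [InnerProductSpace ℝ E]
    [CompleteSpace E] {ρ : E → ℝ} {x : E} (hρ : DifferentiableAt ℝ ρ x) (hx : ρ x ≠ 0) :
    ∇ ρ x = ρ x • score ρ x := by
  simp [score, gradient, fderiv.log hρ hx, hx]

variable {D : ℕ} {ρ : EuclideanSpace ℝ (Fin D) → ℝ} {x : EuclideanSpace ℝ (Fin D)}

theorem differentiableAt_score (hρ : ContDiffAt ℝ 2 ρ x) (hx : ρ x ≠ 0) :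
    DifferentiableAt ℝ (score ρ) x :=
  (contDiffAt_gradient (m := 1) (hρ.log hx) (by norm_num)).differentiableAt (by simp)

theorem lap_eq_mul_lap_log_add_norm_score_sq (hρ : ContDiffAt ℝ 2 ρ x) (hx : ρ x ≠ 0) :
    lap ρ x = ρ x * (lap (fun z => Real.log (ρ z)) x + ‖score ρ x‖ ^ 2) := by
  have hgrad : ∇ ρ =ᶠ[𝓝 x] fun z => ρ z • score ρ z := by
    filter_upwards [hρ.eventually (by simp), hρ.continuousAt.eventually_ne hx] with z hz hz0
    exact gradient_eq_smul_score (hz.differentiableAt (by simp)) hz0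
  have hd : DifferentiableAt ℝ ρ x := hρ.differentiableAt (by simp)
  rw [lap, divg_congr hgrad, divg_smul hd (differentiableAt_score hρ hx),
    gradient_eq_smul_score hd hx, real_inner_smul_left, real_inner_self_eq_norm_sq, mul_add]
  rfl

/-- The Hamiltonian `H(x, ξ)` for which the Fokker–Planck equation with drift `c x` and squared
diffusion coefficient `g` is the Hamilton–Jacobi equation `∂ₜ log p = -H(x, ∇ log p)`. The term
`Δ log ρ` is treated as a given potential in `x`, not as a function of the momentum `ξ`. -/
noncomputable def fokkerPlanckHamiltonian (c g : ℝ) (ρ : EuclideanSpace ℝ (Fin D) → ℝ)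
    (q : EuclideanSpace ℝ (Fin D) × EuclideanSpace ℝ (Fin D)) : ℝ :=
  c * D + c * ⟪q.1, q.2⟫ - g / 2 * (lap (fun z => Real.log (ρ z)) q.1 + ‖q.2‖ ^ 2)

theorem fokkerPlanck_eq_neg_mul_hamiltonian (hρ : ContDiffAt ℝ 2 ρ x) (hx : ρ x ≠ 0) (c g : ℝ) :
    -divg (fun z => ρ z • (c • z)) x + (1 / 2) * g * lap ρ x
      = ρ x * -fokkerPlanckHamiltonian c g ρ (x, score ρ x) := by
  have hd : DifferentiableAt ℝ ρ x := hρ.differentiableAt (by simp)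
  rw [divg_smul hd (by fun_prop), divg_const_smul_id, lap_eq_mul_lap_log_add_norm_score_sq hρ hx,
    gradient_eq_smul_score hd hx, real_inner_smul_left, real_inner_smul_right,
    fokkerPlanckHamiltonian, real_inner_comm x]
  ring

theorem hasFDerivAt_fokkerPlanckHamiltonian {c g : ℝ} {ξ : EuclideanSpace ℝ (Fin D)}
    (hlap : DifferentiableAt ℝ (lap fun z => Real.log (ρ z)) x) :
    HasFDerivAt (fokkerPlanckHamiltonian c g ρ)
      ((innerSL ℝ (c • ξ - (g / 2) • ∇ (lap fun z => Real.log (ρ z)) x)).coprod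
        (innerSL ℝ (c • x - g • ξ))) (x, ξ) := by
  have hpotential : HasFDerivAt (fun q : _ × EuclideanSpace ℝ (Fin D) =>
      lap (fun z => Real.log (ρ z)) q.1) _ (x, ξ) :=
    hlap.hasFDerivAt.comp (x, ξ) hasFDerivAt_fst
  convert! (((hasFDerivAt_fst.inner ℝ hasFDerivAt_snd).const_mul c).const_add (c * D)).sub
    ((hpotential.add hasFDerivAt_snd.norm_sq).const_mul (g / 2)) using 1
  ext v
  · simp [inner_gradient_left, real_inner_comm]
  · have hkinetic : g * ⟪ξ, v⟫ = g / 2 * (2 * ⟪ξ, v⟫) := by ring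
    simpa using hkinetic

theorem hasDerivWithinAt_score_along {p : ℝ → EuclideanSpace ℝ (Fin D) → ℝ}
    {y : ℝ → EuclideanSpace ℝ (Fin D)} {I : Set ℝ} {s c g : ℝ}
    (hp : ContDiffAt ℝ 3 (uncurry p) (s, y s)) (hpos : p s (y s) ≠ 0)
    (hFP : ∀ᶠ x in 𝓝 (y s), deriv (fun τ => p τ x) s
      = -divg (fun z => p s z • (c • z)) x + (1 / 2) * g * lap (p s) x)
    (hy : HasDerivWithinAt y (c • y s - g • score (p s) (y s)) I s) :
    HasDerivWithinAt (fun r => score (p r) (y r))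
      (-(c • score (p s) (y s) - (g / 2) • ∇ (lap fun z => Real.log (p s z)) (y s))) I s := by
  have hps : ContDiffAt ℝ 3 (p s) (y s) :=
    hp.comp (y s) (contDiff_prodMk_right s).contDiffAt
  have hlap : DifferentiableAt ℝ (lap fun z => Real.log (p s z)) (y s) :=
    (contDiffAt_divg (m := 1) (contDiffAt_gradient (m := 2) (hps.log hpos) (by norm_num))
      (by norm_num)).differentiableAt (by simp)
  have hlog : ContDiffAt ℝ 2 (uncurry fun r z => Real.log (p r z)) (s, y s) :=
    (hp.log hpos).of_le (by norm_num)
  refine hasDerivWithinAt_gradient_of_hamiltonJacobi hlog ?_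
    (hasFDerivAt_fokkerPlanckHamiltonian hlap) hy
  have hpNear : ∀ᶠ x in 𝓝 (y s), ContDiffAt ℝ 3 (uncurry p) (s, x) :=
    (Continuous.prodMk_right s).continuousAt.eventually (hp.eventually (by simp))
  filter_upwards [hFP, hpNear, hps.continuousAt.eventually_ne hpos] with x hFPx hpx hx
  have htime : DifferentiableAt ℝ (fun τ => p τ x) s :=
    (hpx.comp s (contDiff_prodMk_left x).contDiffAt).differentiableAt (by simp)
  have hspace : ContDiffAt ℝ 2 (p s) x :=
    (hpx.comp x (contDiff_prodMk_right s).contDiffAt).of_le (by norm_num)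
  rw [deriv.log htime hx, hFPx, fokkerPlanck_eq_neg_mul_hamiltonian hspace hx,
    mul_div_cancel_left₀ _ hx]
  rfl

end Score

section ConservedQuantities

variable {E : Type*} [NormedAddCommGroup E] [NormedSpace ℝ E]

theorem eq_of_hasDerivWithinAt_zero {F : ℝ → E} {a b : ℝ} (hab : a ≤ b)
    (hF : ∀ s ∈ Icc a b, HasDerivWithinAt F 0 (Icc a b) s) : F a = F b :=
  (constant_of_has_deriv_right_zero (fun s hs => (hF s hs).continuousWithinAt)
    (fun s hs => (hF s (Ico_subset_Icc_self hs)).mono_of_mem_nhdsWithin (Icc_mem_nhdsGE_of_mem hs))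
    b (right_mem_Icc.2 hab)).symm

variable {α ν : ℝ → ℝ} {y G : ℝ → E} {c ν' s : ℝ} {I : Set ℝ}

theorem hasDerivWithinAt_zero_smul (hα : HasDerivWithinAt α (c * α s) I s)
    (hG : HasDerivWithinAt G (-(c • G s)) I s) :
    HasDerivWithinAt (fun r => α r • G r) 0 I s := by
  convert! hα.smul hG using 1
  module

/- `ν` stands for the noise-to-signal ratio `e^{-λ}`, for which the squared diffusion coefficient
`-λ' σ²` is `α² ν'`. -/
theorem hasDerivWithinAt_zero_inv_smul_add_smul (hαs : α s ≠ 0)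
    (hα : HasDerivWithinAt α (c * α s) I s) (hν : HasDerivWithinAt ν ν' I s)
    (hy : HasDerivWithinAt y (c • y s - (α s ^ 2 * ν') • G s) I s)
    (hG : HasDerivWithinAt G (-(c • G s)) I s) :
    HasDerivWithinAt (fun r => (α r)⁻¹ • y r + ν r • α r • G r) 0 I s := by
  convert! ((hα.inv hαs).smul hy).add (hν.smul (hasDerivWithinAt_zero_smul hα hG)) using 1
  simp only [Pi.inv_apply]
  match_scalars <;> field_simp <;> ring

theorem linear_system_closed_form {f ν' : ℝ → ℝ} {a b : ℝ} (hab : a ≤ b)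
    (hα0 : ∀ s ∈ Icc a b, α s ≠ 0)
    (hα : ∀ s ∈ Icc a b, HasDerivWithinAt α (f s * α s) (Icc a b) s)
    (hν : ∀ s ∈ Icc a b, HasDerivWithinAt ν (ν' s) (Icc a b) s)
    (hy : ∀ s ∈ Icc a b,
      HasDerivWithinAt y (f s • y s - (α s ^ 2 * ν' s) • G s) (Icc a b) s)
    (hG : ∀ s ∈ Icc a b, HasDerivWithinAt G (-(f s • G s)) (Icc a b) s) :
    y a = α a • ((α b)⁻¹ • y b + ((ν b - ν a) * α b) • G b) := by
  have hmomentum : α a • G a = α b • G b :=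
    eq_of_hasDerivWithinAt_zero hab fun s hs => hasDerivWithinAt_zero_smul (hα s hs) (hG s hs)
  have hposition : (α a)⁻¹ • y a + ν a • α a • G a = (α b)⁻¹ • y b + ν b • α b • G b :=
    eq_of_hasDerivWithinAt_zero hab fun s hs =>
      hasDerivWithinAt_zero_inv_smul_add_smul (hα0 s hs) (hα s hs) (hν s hs) (hy s hs) (hG s hs)
  rw [← inv_smul_eq_iff₀ (hα0 a (left_mem_Icc.2 hab)), eq_sub_of_add_eq hposition, hmomentum]
  module

end ConservedQuantities

section NoiseSchedule

theorem hasDerivAt_deriv_log_mul {α : ℝ → ℝ} {s : ℝ} (hα : DifferentiableAt ℝ α s)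
    (hs : α s ≠ 0) : HasDerivAt α (deriv (fun v => Real.log (α v)) s * α s) s := by
  rw [deriv.log hα hs, div_mul_cancel₀ _ hs]
  exact hα.hasDerivAt

theorem exp_neg_log_sq_div_sq {a b : ℝ} (ha : a ≠ 0) (hb : b ≠ 0) :
    Real.exp (-Real.log (a ^ 2 / b ^ 2)) = b ^ 2 / a ^ 2 := by
  rw [← Real.log_inv, Real.exp_log (by positivity), inv_div]

theorem hasDerivAt_exp_neg_log_sq_div_sq {α σ : ℝ → ℝ} {s : ℝ} (hα : DifferentiableAt ℝ α s)
    (hσ : DifferentiableAt ℝ σ s) (hαs : α s ≠ 0) (hσs : σ s ≠ 0) :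
    HasDerivAt (fun u => Real.exp (-Real.log (α u ^ 2 / σ u ^ 2)))
      (σ s ^ 2 / α s ^ 2 * -deriv (fun u => Real.log (α u ^ 2 / σ u ^ 2)) s) s := by
  have hlog : DifferentiableAt ℝ (fun u => Real.log (α u ^ 2 / σ u ^ 2)) s :=
    ((hα.pow 2).div (hσ.pow 2) (pow_ne_zero 2 hσs)).log
      (div_ne_zero (pow_ne_zero 2 hαs) (pow_ne_zero 2 hσs))
  rw [← exp_neg_log_sq_div_sq hαs hσs]
  exact hlog.hasDerivAt.neg.exp

end NoiseSchedule

theorem hp_ode_gaussian_closed_form_general {D : ℕ} {α σ : ℝ → ℝ}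
    (hα : Differentiable ℝ α) (hσ : Differentiable ℝ σ)
    (hαpos : ∀ u, 0 < α u) (hσpos : ∀ u, 0 < σ u) {lam f gsq : ℝ → ℝ}
    (hlam : ∀ u, lam u = Real.log (α u ^ 2 / σ u ^ 2))
    (hf : ∀ u, f u = deriv (fun v => Real.log (α v)) u)
    (hgsq : ∀ u, gsq u = -(deriv lam u) * σ u ^ 2)
    {p : ℝ → EuclideanSpace ℝ (Fin D) → ℝ} {y : ℝ → EuclideanSpace ℝ (Fin D)} {a b : ℝ}
    (hab : a ≤ b)
    (hp : ∀ s ∈ Icc a b, ContDiffAt ℝ 3 (uncurry p) (s, y s))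
    (hppos : ∀ s ∈ Icc a b, 0 < p s (y s))
    (hFP : ∀ s ∈ Icc a b, ∀ᶠ x in 𝓝 (y s), deriv (fun τ => p τ x) s
      = -divg (fun z => p s z • (f s • z)) x + (1 / 2) * gsq s * lap (p s) x)
    (hgauss : ∀ s ∈ Icc a b, ∇ (lap fun z => Real.log (p s z)) (y s) = 0)
    (hy : ∀ s ∈ Icc a b,
      HasDerivWithinAt y (f s • y s - gsq s • score (p s) (y s)) (Icc a b) s) :
    y a = α a • ((α b)⁻¹ • (y b + σ b ^ 2 • score (p b) (y b))
        - (Real.exp (-(lam a)) * α b) • score (p b) (y b))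
    ∧ y a = α a • ((α b)⁻¹ • y b
        + ((Real.exp (-(lam b)) - Real.exp (-(lam a))) * α b) • score (p b) (y b)) := by
  obtain rfl : lam = _ := funext hlam
  obtain rfl : f = _ := funext hf
  have hα0 (s : ℝ) : α s ≠ 0 := (hαpos s).ne'
  have hσ0 (s : ℝ) : σ s ≠ 0 := (hσpos s).ne'
  have hscore : ∀ s ∈ Icc a b, HasDerivWithinAt (fun r => score (p r) (y r))
      (-(deriv (fun v => Real.log (α v)) s • score (p s) (y s))) (Icc a b) s := fun s hs => by
    simpa [hgauss s hs] using
      hasDerivWithinAt_score_along (hp s hs) (hppos s hs).ne' (hFP s hs) (hy s hs)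
  have hclosed := linear_system_closed_form hab (fun s _ => hα0 s)
    (fun s _ => (hasDerivAt_deriv_log_mul (hα s) (hα0 s)).hasDerivWithinAt)
    (fun s _ => (hasDerivAt_exp_neg_log_sq_div_sq (hα s) (hσ s) (hα0 s)
      (hσ0 s)).hasDerivWithinAt)
    (fun s hs => by
      convert! hy s hs using 3
      rw [hgsq]
      have hαs := hα0 s
      field_simp)
    hscore
  refine ⟨?_, hclosed⟩
  have hαb := hα0 b
  rw [hclosed, exp_neg_log_sq_div_sq hαb (hσ0 b)]
  match_scalars <;> field_simp

/-- Closed-form solution of the high-probability ODE in the Gaussian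
case (Remark 5). -/
theorem hp_ode_gaussian_closed_form {D : ℕ} (hD : 0 < D)
    (α σ : ℝ → ℝ) (hα : ContDiff ℝ (⊤ : ℕ∞) α) (hσ : ContDiff ℝ (⊤ : ℕ∞) σ)
    (hαpos : ∀ u, 0 < α u) (hσpos : ∀ u, 0 < σ u) (hα0 : α 0 = 1)
    (lam f gsq : ℝ → ℝ)
    (hlam : ∀ u, lam u = Real.log (α u ^ 2 / σ u ^ 2))
    (hf : ∀ u, f u = deriv (fun v => Real.log (α v)) u)
    (hgsq : ∀ u, gsq u = -(deriv lam u) * σ u ^ 2)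
    (p : ℝ → EuclideanSpace ℝ (Fin D) → ℝ)
    (hp : ContDiff ℝ (⊤ : ℕ∞) (fun q : ℝ × EuclideanSpace ℝ (Fin D) => p q.1 q.2))
    (hppos : ∀ t x, 0 < p t x)
    (hFP : ∀ t x, deriv (fun τ => p τ x) t
      = - divg (fun y => p t y • (f t • y)) x + (1 / 2) * gsq t * lap (p t) x)
    (hgauss : ∀ s x, gradient (fun z => lap (fun w => Real.log (p s w)) z) x = 0)
    (t : ℝ) (ht : 0 < t)
    (y : ℝ → EuclideanSpace ℝ (Fin D))
    (hy : ∀ s ∈ Set.Icc (0 : ℝ) t, HasDerivAt y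
      (f s • y s - gsq s • gradient (fun z => Real.log (p s z)) (y s)) s) :
    y 0 = (α t)⁻¹ • (y t + σ t ^ 2 • gradient (fun z => Real.log (p t z)) (y t))
        - (Real.exp (-(lam 0)) * α t) • gradient (fun z => Real.log (p t z)) (y t)
    ∧ y 0 = (α t)⁻¹ • y t
        + ((Real.exp (-(lam t)) - Real.exp (-(lam 0))) * α t) •
            gradient (fun z => Real.log (p t z)) (y t) := by
  have h := hp_ode_gaussian_closed_form_general (hα.differentiable (by simp))
    (hσ.differentiable (by simp)) hαpos hσpos hlam hf hgsq ht.le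
    (fun s _ => (hp.of_le (WithTop.coe_le_coe.2 le_top)).contDiffAt) (fun s _ => hppos s (y s))
    (fun s _ => .of_forall (hFP s)) (fun s _ => hgauss s (y s))
    fun s hs => (hy s hs).hasDerivWithinAt
  simpa only [hα0, one_smul, score] using h
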